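/- Let 1 ≤ p < ∞ and let u : M_N → M_N be a completely positive linear map such that ‖u(x)‖_{S_p} ≤ C ‖x‖_{S_p} for all x ∈ M_N. Then for every n ≥ 1 and every x ∈ M_N ⊗ M_n one has ‖(u ⊗ id_{M_n})(x)‖_{S_p^N[M_n]} ≤ C ‖x‖_{S_p^N[M_n]}; equivalently, the regular norm satisfies ‖u‖_r ≤ C. (Matrix-algebra case of the first part of Lemma 2.3, to which the paper reduces by density.) -/

import Mathlib

open scoped Kronecker ENNReal Classical ComplexOrder
open Matrix

noncomputable section

/-- The operator norm (`S_∞` norm) of a complex matrix, acting on Euclidean space. -/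
def opNorm {ι : Type} [Fintype ι] [DecidableEq ι] (a : Matrix ι ι ℂ) : ℝ :=
  ‖LinearMap.toContinuousLinearMap (Matrix.toEuclideanLin a)‖

/-- The Schatten `p`-norm of a complex matrix: the `ℓ^p` norm of its singular values
(the square roots of the eigenvalues of `aᴴ * a`); for `p = ∞` it is the operator norm. -/
def schattenNorm {ι : Type} [Fintype ι] [DecidableEq ι] (p : ℝ≥0∞) (a : Matrix ι ι ℂ) : ℝ :=
  if p = ∞ then opNorm a
  else (∑ i, Real.sqrt ((Matrix.posSemidef_conjTranspose_mul_self a).isHermitian.eigenvalues i) ^ p.toReal)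
      ^ (1 / p.toReal)

/-- Pisier's vector-valued Schatten norm `‖x‖_{S_p^N[M_n]}` on `M_N ⊗ M_n`:
the infimum of `‖a‖_{S_{2p}} ‖y‖_{S_∞} ‖b‖_{S_{2p}}` over factorizations
`x = (a ⊗ 1) · y · (b ⊗ 1)`. -/
def pisierNorm (p : ℝ≥0∞) {N n : ℕ} (x : Matrix (Fin N × Fin n) (Fin N × Fin n) ℂ) : ℝ :=
  sInf { r | ∃ (a b : Matrix (Fin N) (Fin N) ℂ)
      (y : Matrix (Fin N × Fin n) (Fin N × Fin n) ℂ),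
      x = (a ⊗ₖ (1 : Matrix (Fin n) (Fin n) ℂ)) * y * (b ⊗ₖ (1 : Matrix (Fin n) (Fin n) ℂ)) ∧
      r = schattenNorm (2 * p) a * opNorm y * schattenNorm (2 * p) b }

/-- The amplification `u ⊗ id_{M_n} : M_N ⊗ M_n → M_m ⊗ M_n` of a map `u : M_N → M_m`,
acting as `u` on each `M_n`-block entry. -/
def amp {N m n : ℕ} (u : Matrix (Fin N) (Fin N) ℂ → Matrix (Fin m) (Fin m) ℂ)
    (x : Matrix (Fin N × Fin n) (Fin N × Fin n) ℂ) : Matrix (Fin m × Fin n) (Fin m × Fin n) ℂ :=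
  Matrix.of fun ik jl => u (Matrix.of fun i j => x (i, ik.2) (j, jl.2)) ik.1 jl.1

/-- The amplification `id_{M_n} ⊗ u : M_n ⊗ M_N → M_n ⊗ M_m` of a map `u : M_N → M_m`. -/
def ampLeft {n N m : ℕ} (u : Matrix (Fin N) (Fin N) ℂ → Matrix (Fin m) (Fin m) ℂ)
    (x : Matrix (Fin n × Fin N) (Fin n × Fin N) ℂ) : Matrix (Fin n × Fin m) (Fin n × Fin m) ℂ :=
  Matrix.of fun ki lj => u (Matrix.of fun i j => x (ki.1, i) (lj.1, j)) ki.2 lj.2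

/-- The trace pairing `T : M_k ⊗ M_k → ℂ`, with `T(a ⊗ b) = tr(ᵗa·b)`; writing
`z` as a `k×k` matrix of blocks `z_{ij} ∈ M_k`, `T(z) = Σ_{i,j} (z_{ij})_{ij}`. -/
def tracePair {k : ℕ} (z : Matrix (Fin k × Fin k) (Fin k × Fin k) ℂ) : ℂ :=
  ∑ i : Fin k, ∑ j : Fin k, z (i, i) (j, j)

/-- A map `u : M_N → M_m` is completely positive if all its amplifications
`id_{M_n} ⊗ u` preserve positive semidefiniteness. -/
def CompletelyPositive {N m : ℕ}
    (u : Matrix (Fin N) (Fin N) ℂ → Matrix (Fin m) (Fin m) ℂ) : Prop :=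
  ∀ (n : ℕ) (x : Matrix (Fin n × Fin N) (Fin n × Fin N) ℂ),
    x.PosSemidef → (ampLeft u x).PosSemidef

/-- The regular norm (relative to `p`) of `u : M_N → M_m`: the supremum in `[0,∞]`
over `n ≥ 1` of the norms of the amplifications `u ⊗ id_{M_n}` from
`(M_N ⊗ M_n, ‖·‖_{S_p^N[M_n]})` to `(M_m ⊗ M_n, ‖·‖_{S_p^m[M_n]})`. -/
def regNorm (p : ℝ≥0∞) {N m : ℕ}
    (u : Matrix (Fin N) (Fin N) ℂ → Matrix (Fin m) (Fin m) ℂ) : ℝ≥0∞ :=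
  ⨆ (n : ℕ) (x : Matrix (Fin N × Fin (n + 1)) (Fin N × Fin (n + 1)) ℂ)
    (_ : pisierNorm p x ≤ 1), ENNReal.ofReal (pisierNorm p (amp u x))

/-- Pisier's norm `ρ_p` on `M_n ⊗ M_m` (with `q` the conjugate exponent `p'`):
the infimum of `‖γ‖_{S_{2p}} ‖α‖_{S_{2p'}} ‖g‖_{S_∞} ‖δ‖_{S_{2p}} ‖β‖_{S_{2p'}}`
over factorizations `a = (γ ⊗ α) · g · (δ ⊗ β)`. -/
def rho (p q : ℝ≥0∞) {n m : ℕ} (a : Matrix (Fin n × Fin m) (Fin n × Fin m) ℂ) : ℝ :=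
  sInf { r | ∃ (γ δ : Matrix (Fin n) (Fin n) ℂ) (α β : Matrix (Fin m) (Fin m) ℂ)
      (g : Matrix (Fin n × Fin m) (Fin n × Fin m) ℂ),
      a = (γ ⊗ₖ α) * g * (δ ⊗ₖ β) ∧
      r = schattenNorm (2 * p) γ * schattenNorm (2 * q) α * opNorm g *
          schattenNorm (2 * p) δ * schattenNorm (2 * q) β }

/-- The amplification `u ⊗ id_{M_n}` of a map `u` defined only on a subspace `S ⊆ M_N`,
applied to an element of `M_N ⊗ M_n` all of whose `M_N`-valued block entries lie in `S`. -/
def ampOn {N m n : ℕ} (S : Submodule ℂ (Matrix (Fin N) (Fin N) ℂ))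
    (u : S →ₗ[ℂ] Matrix (Fin m) (Fin m) ℂ)
    (x : Matrix (Fin N × Fin n) (Fin N × Fin n) ℂ)
    (h : ∀ k l : Fin n, (Matrix.of fun i j => x (i, k) (j, l)) ∈ S) :
    Matrix (Fin m × Fin n) (Fin m × Fin n) ℂ :=
  Matrix.of fun ik jl => u ⟨Matrix.of fun i j => x (i, ik.2) (j, jl.2), h ik.2 jl.2⟩ ik.1 jl.1

end

section RegularNorm

lemma opNorm_nonneg {ι : Type} [Fintype ι] [DecidableEq ι] (a : Matrix ι ι ℂ) :
    0 ≤ opNorm a := norm_nonneg _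

/-- Two real families whose associated monic polynomials agree have the same values. -/
lemma map_eq_map_of_prod_X_sub_C_eq {ι : Type} [Fintype ι] {f g : ι → ℝ}
    (h : ∏ i, (Polynomial.X - Polynomial.C (f i : ℂ)) =
      ∏ i, (Polynomial.X - Polynomial.C (g i : ℂ))) :
    Finset.univ.val.map f = Finset.univ.val.map g := by
  have hroots := congrArg Polynomial.roots h
  rw [Polynomial.roots_prod _ _ (by simp [Finset.prod_ne_zero_iff, Polynomial.X_sub_C_ne_zero]),
    Polynomial.roots_prod _ _ (by simp [Finset.prod_ne_zero_iff, Polynomial.X_sub_C_ne_zero])]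
    at hroots
  simpa [Function.comp_def] using congrArg (Multiset.map Complex.re) hroots

lemma charpoly_conjTranspose_mul_self_of_isHermitian {ι : Type} [Fintype ι] [DecidableEq ι]
    {a : Matrix ι ι ℂ} (ha : a.IsHermitian) :
    (aᴴ * a).charpoly =
      ∏ i, (Polynomial.X - Polynomial.C ((ha.eigenvalues i ^ 2 : ℝ) : ℂ)) := by
  have h : cfc (fun t : ℝ => t ^ 2) a = aᴴ * a :=
    (cfc_pow_id (R := ℝ) a 2 (ha : IsSelfAdjoint a)).trans (by rw [ha.eq, pow_two])
  rw [← h]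
  exact ha.charpoly_cfc_eq _

lemma schattenNorm_of_posSemidef {ι : Type} [Fintype ι] [DecidableEq ι] {p : ℝ≥0∞}
    (hp : p ≠ ∞) {a : Matrix ι ι ℂ} (ha : a.PosSemidef) :
    schattenNorm p a = (∑ i, ha.isHermitian.eigenvalues i ^ p.toReal) ^ (1 / p.toReal) := by
  have hmap := map_eq_map_of_prod_X_sub_C_eq
    (((posSemidef_conjTranspose_mul_self a).isHermitian.charpoly_eq).symm.trans
      (charpoly_conjTranspose_mul_self_of_isHermitian ha.isHermitian))
  have hsum := congrArg (fun s => (s.map fun t : ℝ => Real.sqrt t ^ p.toReal).sum) hmap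
  simp only [Multiset.map_map, Function.comp_def] at hsum
  rw [schattenNorm, if_neg hp]
  congr 1
  refine hsum.trans (Finset.sum_congr rfl fun i _ => ?_)
  rw [Real.sqrt_sq (ha.eigenvalues_nonneg i)]

lemma schattenNorm_nonneg {ι : Type} [Fintype ι] [DecidableEq ι] {p : ℝ≥0∞}
    (a : Matrix ι ι ℂ) : 0 ≤ schattenNorm p a := by
  rw [schattenNorm]
  split_ifs
  · exact norm_nonneg _
  · positivity

lemma schattenNorm_two_mul {ι : Type} [Fintype ι] [DecidableEq ι] {p : ℝ≥0∞}
    (hp : p ≠ ∞) (a : Matrix ι ι ℂ) :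
    schattenNorm (2 * p) a = Real.sqrt (schattenNorm p (aᴴ * a)) := by
  have hpos := posSemidef_conjTranspose_mul_self a
  rw [schattenNorm_of_posSemidef hp hpos, schattenNorm,
    if_neg (ENNReal.mul_ne_top (by simp) hp), Real.sqrt_eq_rpow, ← Real.rpow_mul]
  · congr 1
    · refine Finset.sum_congr rfl fun i _ => ?_
      rw [Real.sqrt_eq_rpow, ← Real.rpow_mul (hpos.eigenvalues_nonneg i)]
      simp
    · simp
  · exact Finset.sum_nonneg fun i _ => Real.rpow_nonneg (hpos.eigenvalues_nonneg i) _

lemma schattenNorm_mul_conjTranspose_self {ι : Type} [Fintype ι] [DecidableEq ι] {p : ℝ≥0∞}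
    (hp : p ≠ ∞) (a : Matrix ι ι ℂ) :
    schattenNorm p (a * aᴴ) = schattenNorm p (aᴴ * a) := by
  rw [schattenNorm_of_posSemidef hp (posSemidef_self_mul_conjTranspose a),
    schattenNorm_of_posSemidef hp (posSemidef_conjTranspose_mul_self a),
    (Matrix.IsHermitian.eigenvalues_eq_eigenvalues_iff _ _).2 (charpoly_mul_comm a aᴴ)]

lemma schattenNorm_one_pos {ι : Type} [Fintype ι] [DecidableEq ι] [Nonempty ι] {p : ℝ≥0∞}
    (hp : p ≠ ∞) : 0 < schattenNorm p (1 : Matrix ι ι ℂ) := by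
  rw [schattenNorm_of_posSemidef hp PosSemidef.one]
  exact Real.rpow_pos_of_pos (Finset.sum_pos
    (fun i _ => Real.rpow_pos_of_pos (PosDef.one.eigenvalues_pos i) _) Finset.univ_nonempty) _

open scoped Matrix.Norms.L2Operator MatrixOrder

lemma Matrix.PosSemidef.exists_eq_conjTranspose_mul_self {ι : Type} [Fintype ι] [DecidableEq ι]
    {a : Matrix ι ι ℂ} (ha : a.PosSemidef) : ∃ s : Matrix ι ι ℂ, a = sᴴ * s :=
  CStarAlgebra.nonneg_iff_eq_star_mul_self.1 ha.nonneg

/-- Douglas factorization: if `sᴴ s = tᴴ t`, then `s` factors through `t` by a contraction. -/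
lemma exists_contraction_mul_eq {κ ι : Type} [Fintype κ] [DecidableEq κ] [Fintype ι]
    [DecidableEq ι] {s : Matrix κ ι ℂ} {t : Matrix ι ι ℂ} (h : sᴴ * s = tᴴ * t) :
    ∃ w : Matrix κ ι ℂ, ‖w‖ ≤ 1 ∧ s = w * t := by
  set S := toEuclideanLin s with hS
  set T := toEuclideanLin t with hT
  have hnorm (v : EuclideanSpace ℂ ι) : ‖S v‖ = ‖T v‖ := by
    have key {k : Type} [Fintype k] (r : Matrix k ι ℂ) :
        inner ℂ (toEuclideanLin r v) (toEuclideanLin r v) =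
          (rᴴ * r) *ᵥ v.ofLp ⬝ᵥ star v.ofLp := by
      rw [← Matrix.mulVec_mulVec, EuclideanSpace.inner_eq_star_dotProduct, dotProduct_comm,
        dotProduct_comm (rᴴ *ᵥ _), dotProduct_mulVec, ← star_mulVec]
      rfl
    have hinner : inner ℂ (S v) (S v) = inner ℂ (T v) (T v) := by rw [hS, hT, key, key, h]
    rw [@norm_eq_sqrt_re_inner ℂ, @norm_eq_sqrt_re_inner ℂ, hinner]
  have hker : LinearMap.ker T ≤ LinearMap.ker S := fun v hv => by
    rw [LinearMap.mem_ker] at hv ⊢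
    rw [← norm_eq_zero, hnorm, hv, norm_zero]
  let L : LinearMap.range T →ₗ[ℂ] EuclideanSpace ℂ κ :=
    (LinearMap.ker T).liftQ S hker ∘ₗ T.quotKerEquivRange.symm.toLinearMap
  have hL (v : EuclideanSpace ℂ ι) : L ⟨T v, v, rfl⟩ = S v := by
    have hv : T.quotKerEquivRange.symm ⟨T v, v, rfl⟩ = (LinearMap.ker T).mkQ v :=
      T.quotKerEquivRange_symm_apply_image v _
    simp [L, hv]
  have hLnorm (w : LinearMap.range T) : ‖L w‖ = ‖w‖ := by
    obtain ⟨_, v, rfl⟩ := w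
    rw [hL, hnorm]
    rfl
  let W : EuclideanSpace ℂ ι →ₗ[ℂ] EuclideanSpace ℂ κ :=
    L ∘ₗ (LinearMap.range T).orthogonalProjectionOnto.toLinearMap
  refine ⟨toEuclideanLin.symm W, ?_, ?_⟩
  · rw [l2_opNorm_def, LinearEquiv.trans_apply, LinearEquiv.apply_symm_apply]
    refine ContinuousLinearMap.opNorm_le_bound _ zero_le_one fun v => ?_
    rw [one_mul]
    exact (hLnorm _).trans_le (Submodule.norm_orthogonalProjectionOnto_apply_le _ v)
  · apply toEuclideanLin.injective
    refine LinearMap.ext fun v => ?_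
    have hproj : (LinearMap.range T).orthogonalProjectionOnto (T v) = ⟨T v, v, rfl⟩ :=
      Submodule.orthogonalProjectionOnto_mem_subspace_eq_self (⟨T v, v, rfl⟩ : LinearMap.range T)
    have hW : W (T v) = S v := (congrArg L hproj).trans (hL v)
    have hmul : toEuclideanLin (toEuclideanLin.symm W * t) =
        toEuclideanLin (toEuclideanLin.symm W) ∘ₗ T := by
      ext1 v
      simp [hT, toLpLin_apply]
    rw [hmul, LinearEquiv.apply_symm_apply, LinearMap.comp_apply, hW]

lemma posSemidef_fromBlocks_one {ι : Type} [Fintype ι] [DecidableEq ι] {y : Matrix ι ι ℂ}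
    (hy : ‖y‖ ≤ 1) : (fromBlocks 1 y yᴴ 1).PosSemidef := by
  have : Invertible (1 : Matrix ι ι ℂ) := invertibleOne
  rw [PosDef.fromBlocks₁₁ y 1 PosDef.one]
  rw [inv_one, mul_one, ← Matrix.le_iff,
    ← CStarAlgebra.norm_le_one_iff_of_nonneg _ (posSemidef_conjTranspose_mul_self y).nonneg,
    l2_opNorm_conjTranspose_mul_self]
  exact mul_le_one₀ hy (norm_nonneg _) hy

/-- A block matrix `[p x; xᴴ q]` is positive only if `x` factors as `sᴴ z t` with `z` a
contraction, for any `s`, `t` with `p = sᴴ s`, `q = tᴴ t`. -/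
lemma exists_contraction_of_posSemidef_fromBlocks {ι : Type} [Fintype ι] [DecidableEq ι]
    {x x' s t : Matrix ι ι ℂ} (h : (fromBlocks (sᴴ * s) x x' (tᴴ * t)).PosSemidef) :
    ∃ z : Matrix ι ι ℂ, ‖z‖ ≤ 1 ∧ x = sᴴ * z * t := by
  obtain ⟨r, hr⟩ := h.exists_eq_conjTranspose_mul_self
  obtain ⟨w₁, hw₁, h₁⟩ := exists_contraction_mul_eq (s := r.submatrix id Sum.inl) (t := s) <| by
    ext i j
    exact (congrFun₂ hr (Sum.inl i) (Sum.inl j)).symm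
  obtain ⟨w₂, hw₂, h₂⟩ := exists_contraction_mul_eq (s := r.submatrix id Sum.inr) (t := t) <| by
    ext i j
    exact (congrFun₂ hr (Sum.inr i) (Sum.inr j)).symm
  refine ⟨w₁ᴴ * w₂, ?_, ?_⟩
  · refine (l2_opNorm_mul _ _).trans ?_
    rw [l2_opNorm_conjTranspose]
    exact mul_le_one₀ hw₁ (norm_nonneg _) hw₂
  · have hx : x = (r.submatrix id Sum.inl)ᴴ * r.submatrix id Sum.inr := by
      ext i j
      exact congrFun₂ hr (Sum.inl i) (Sum.inr j)
    rw [hx, h₁, h₂, conjTranspose_mul]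
    simp only [Matrix.mul_assoc]

section Amplification

variable {N m n : ℕ}

lemma amp_smul (u : Matrix (Fin N) (Fin N) ℂ →ₗ[ℂ] Matrix (Fin m) (Fin m) ℂ) (c : ℂ)
    (x : Matrix (Fin N × Fin n) (Fin N × Fin n) ℂ) : amp u (c • x) = c • amp u x := by
  ext i j
  exact congrFun₂ (u.map_smul c (Matrix.of fun k l => x (k, i.2) (l, j.2))) i.1 j.1

lemma amp_kronecker_one (u : Matrix (Fin N) (Fin N) ℂ →ₗ[ℂ] Matrix (Fin m) (Fin m) ℂ)
    (a : Matrix (Fin N) (Fin N) ℂ) :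
    amp u (a ⊗ₖ (1 : Matrix (Fin n) (Fin n) ℂ)) = u a ⊗ₖ (1 : Matrix (Fin n) (Fin n) ℂ) := by
  ext i j
  have h := congrFun₂ (u.map_smul ((1 : Matrix (Fin n) (Fin n) ℂ) i.2 j.2) a) i.1 j.1
  rw [kroneckerMap_apply, mul_comm]
  refine Eq.trans ?_ h
  simp only [amp, of_apply]
  refine congrFun₂ (congrArg u ?_) _ _
  ext k l
  simp [kroneckerMap_apply, mul_comm]

/-- A completely positive map acts positively on `2 × 2` block matrices over `M_N ⊗ M_n`. -/
lemma CompletelyPositive.fromBlocks_amp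
    {u : Matrix (Fin N) (Fin N) ℂ → Matrix (Fin m) (Fin m) ℂ} (hu : CompletelyPositive u)
    {p x x' q : Matrix (Fin N × Fin n) (Fin N × Fin n) ℂ} (h : (fromBlocks p x x' q).PosSemidef) :
    (fromBlocks (amp u p) (amp u x) (amp u x') (amp u q)).PosSemidef := by
  have hsub := (hu (n + n) _ (h.submatrix fun k : Fin (n + n) × Fin N =>
    Sum.map (Prod.mk k.2) (Prod.mk k.2) (finSumFinEquiv.symm k.1))).submatrix
      (Sum.elim (fun i : Fin m × Fin n => (finSumFinEquiv (Sum.inl i.2), i.1))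
        (fun i : Fin m × Fin n => (finSumFinEquiv (Sum.inr i.2), i.1)))
  convert hsub using 1
  ext (i | i) (j | j) <;>
    simp [-finSumFinEquiv_apply_left, -finSumFinEquiv_apply_right, amp, ampLeft, submatrix]

lemma CompletelyPositive.posSemidef_apply
    {u : Matrix (Fin N) (Fin N) ℂ → Matrix (Fin m) (Fin m) ℂ} (hu : CompletelyPositive u)
    {a : Matrix (Fin N) (Fin N) ℂ} (ha : a.PosSemidef) : (u a).PosSemidef :=
  (hu 1 _ (ha.submatrix Prod.snd)).submatrix fun i => (0, i)

/-- A completely positive map sends `(a ⊗ 1) y (b ⊗ 1)`, with `y` a contraction, to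
`(sᴴ ⊗ 1) z (t ⊗ 1)`, with `z` a contraction, `sᴴ s = u (a aᴴ)` and `tᴴ t = u (bᴴ b)`. -/
lemma exists_amp_factorization_of_norm_le_one
    (u : Matrix (Fin N) (Fin N) ℂ →ₗ[ℂ] Matrix (Fin m) (Fin m) ℂ) (hu : CompletelyPositive u)
    {a b : Matrix (Fin N) (Fin N) ℂ} {s t : Matrix (Fin m) (Fin m) ℂ}
    (hs : u (a * aᴴ) = sᴴ * s) (ht : u (bᴴ * b) = tᴴ * t)
    {y : Matrix (Fin N × Fin n) (Fin N × Fin n) ℂ} (hy : ‖y‖ ≤ 1) :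
    ∃ z : Matrix (Fin m × Fin n) (Fin m × Fin n) ℂ, ‖z‖ ≤ 1 ∧
      amp u ((a ⊗ₖ (1 : Matrix (Fin n) (Fin n) ℂ)) * y * (b ⊗ₖ (1 : Matrix (Fin n) (Fin n) ℂ))) =
        (sᴴ ⊗ₖ (1 : Matrix (Fin n) (Fin n) ℂ)) * z * (t ⊗ₖ (1 : Matrix (Fin n) (Fin n) ℂ)) := by
  have hpos := hu.fromBlocks_amp (n := n) <| by
    simpa only [fromBlocks_conjTranspose, fromBlocks_multiply, Matrix.mul_zero, Matrix.zero_mul,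
      add_zero, zero_add, Matrix.mul_one, conjTranspose_zero, conjTranspose_kronecker,
      conjTranspose_one, conjTranspose_conjTranspose, ← mul_kronecker_mul] using
      (posSemidef_fromBlocks_one hy).mul_mul_conjTranspose_same
        (fromBlocks (a ⊗ₖ (1 : Matrix (Fin n) (Fin n) ℂ)) 0 0 (bᴴ ⊗ₖ (1 : Matrix (Fin n) (Fin n) ℂ)))
  rw [amp_kronecker_one, amp_kronecker_one, hs, ht] at hpos
  have key := exists_contraction_of_posSemidef_fromBlocks
    (s := s ⊗ₖ (1 : Matrix (Fin n) (Fin n) ℂ)) (t := t ⊗ₖ (1 : Matrix (Fin n) (Fin n) ℂ))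
    (x := amp u ((a ⊗ₖ (1 : Matrix (Fin n) (Fin n) ℂ)) * y *
      (b ⊗ₖ (1 : Matrix (Fin n) (Fin n) ℂ)))) <| by
    simp only [conjTranspose_kronecker, conjTranspose_one, ← mul_kronecker_mul, Matrix.mul_one]
    exact hpos
  simpa only [conjTranspose_kronecker, conjTranspose_one] using key

lemma exists_amp_factorization
    (u : Matrix (Fin N) (Fin N) ℂ →ₗ[ℂ] Matrix (Fin m) (Fin m) ℂ) (hu : CompletelyPositive u)
    {a b : Matrix (Fin N) (Fin N) ℂ} {s t : Matrix (Fin m) (Fin m) ℂ}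
    (hs : u (a * aᴴ) = sᴴ * s) (ht : u (bᴴ * b) = tᴴ * t)
    (y : Matrix (Fin N × Fin n) (Fin N × Fin n) ℂ) :
    ∃ z : Matrix (Fin m × Fin n) (Fin m × Fin n) ℂ, ‖z‖ ≤ ‖y‖ ∧
      amp u ((a ⊗ₖ (1 : Matrix (Fin n) (Fin n) ℂ)) * y * (b ⊗ₖ (1 : Matrix (Fin n) (Fin n) ℂ))) =
        (sᴴ ⊗ₖ (1 : Matrix (Fin n) (Fin n) ℂ)) * z * (t ⊗ₖ (1 : Matrix (Fin n) (Fin n) ℂ)) := by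
  obtain ⟨y', hy', hyy'⟩ : ∃ y' : Matrix (Fin N × Fin n) (Fin N × Fin n) ℂ,
      ‖y'‖ ≤ 1 ∧ y = (‖y‖ : ℂ) • y' := by
    rcases eq_or_ne y 0 with rfl | h0
    · exact ⟨0, by simp, by simp⟩
    · have hne : ‖y‖ ≠ 0 := norm_ne_zero_iff.2 h0
      have hne' : (‖y‖ : ℂ) ≠ 0 := by exact_mod_cast hne
      refine ⟨(‖y‖ : ℂ)⁻¹ • y, ?_, by rw [smul_inv_smul₀ hne']⟩
      rw [norm_smul, norm_inv, Complex.norm_real, norm_norm, inv_mul_cancel₀ hne]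
  obtain ⟨z, hz, hzu⟩ := exists_amp_factorization_of_norm_le_one u hu hs ht hy'
  refine ⟨(‖y‖ : ℂ) • z, ?_, ?_⟩
  · rw [norm_smul, Complex.norm_real, norm_norm]
    exact mul_le_of_le_one_right (norm_nonneg _) hz
  · nth_rewrite 1 [hyy']
    rw [Matrix.mul_smul, Matrix.smul_mul, amp_smul, hzu, Matrix.mul_smul, Matrix.smul_mul]

lemma pisierNorm_le {p : ℝ≥0∞} (a b : Matrix (Fin N) (Fin N) ℂ)
    (y : Matrix (Fin N × Fin n) (Fin N × Fin n) ℂ) :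
    pisierNorm p ((a ⊗ₖ (1 : Matrix (Fin n) (Fin n) ℂ)) * y *
      (b ⊗ₖ (1 : Matrix (Fin n) (Fin n) ℂ))) ≤
      schattenNorm (2 * p) a * opNorm y * schattenNorm (2 * p) b := by
  refine csInf_le ⟨0, ?_⟩ ⟨a, b, y, rfl, rfl⟩
  rintro _ ⟨a, b, y, -, rfl⟩
  exact mul_nonneg (mul_nonneg (schattenNorm_nonneg _) (opNorm_nonneg _)) (schattenNorm_nonneg _)

end Amplification

lemma nonneg_of_schattenNorm_le {N : ℕ} [NeZero N] {p : ℝ≥0∞} (hp : p ≠ ∞) {C : ℝ}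
    {u : Matrix (Fin N) (Fin N) ℂ → Matrix (Fin N) (Fin N) ℂ}
    (hb : ∀ x, schattenNorm p (u x) ≤ C * schattenNorm p x) : 0 ≤ C :=
  nonneg_of_mul_nonneg_left ((schattenNorm_nonneg _).trans (hb 1)) (schattenNorm_one_pos hp)

lemma pisierNorm_of_isEmpty {n : ℕ} {p : ℝ≥0∞} (hp0 : p ≠ 0) (hp : p ≠ ∞)
    (x : Matrix (Fin 0 × Fin n) (Fin 0 × Fin n) ℂ) : pisierNorm p x = 0 := by
  have h0 (a : Matrix (Fin 0) (Fin 0) ℂ) : schattenNorm (2 * p) a = 0 := by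
    rw [schattenNorm, if_neg (ENNReal.mul_ne_top (by simp) hp), Finset.univ_eq_empty,
      Finset.sum_empty, Real.zero_rpow]
    simp [ENNReal.toReal_eq_zero_iff, hp0, hp]
  rw [pisierNorm]
  simp only [h0, mul_zero]
  refine le_antisymm (Real.sInf_nonpos fun r ⟨_, _, _, _, hr⟩ => hr.le)
    (Real.sInf_nonneg fun r ⟨_, _, _, _, hr⟩ => hr.ge)

end RegularNorm

/-- Matrix-algebra case of the first part of Lemma 2.3: a completely positive map that is
bounded on `S_p` with constant `C` has regular norm at most `C`. -/
theorem regular_norm_le_of_completelyPositive {N : ℕ} (p : ℝ≥0∞) (hp : 1 ≤ p) (hptop : p ≠ ∞)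
    (C : ℝ) (u : Matrix (Fin N) (Fin N) ℂ →ₗ[ℂ] Matrix (Fin N) (Fin N) ℂ)
    (hcp : CompletelyPositive (⇑u))
    (hb : ∀ x : Matrix (Fin N) (Fin N) ℂ, schattenNorm p (u x) ≤ C * schattenNorm p x) :
    ∀ n : ℕ, 1 ≤ n → ∀ x : Matrix (Fin N × Fin n) (Fin N × Fin n) ℂ,
      pisierNorm p (amp (⇑u) x) ≤ C * pisierNorm p x := by
  intro n _ x
  rcases Nat.eq_zero_or_pos N with rfl | hN
  · have hp0 : p ≠ 0 := (zero_lt_one.trans_le hp).ne'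
    simp [pisierNorm_of_isEmpty hp0 hptop]
  have : NeZero N := ⟨hN.ne'⟩
  have hC : 0 ≤ C := nonneg_of_schattenNorm_le hptop hb
  rw [pisierNorm.eq_def p x, ← smul_eq_mul, ← Real.sInf_smul_of_nonneg hC]
  refine le_csInf (Set.Nonempty.smul_set ⟨_, 1, 1, x, by simp, rfl⟩) ?_
  rintro _ ⟨_, ⟨a, b, y, rfl, rfl⟩, rfl⟩
  obtain ⟨s, hs⟩ := (hcp.posSemidef_apply
    (posSemidef_self_mul_conjTranspose a)).exists_eq_conjTranspose_mul_self
  obtain ⟨t, ht⟩ := (hcp.posSemidef_apply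
    (posSemidef_conjTranspose_mul_self b)).exists_eq_conjTranspose_mul_self
  obtain ⟨z, hz, hzu⟩ := exists_amp_factorization u hcp hs ht y
  have hsa : schattenNorm (2 * p) sᴴ ≤ √C * schattenNorm (2 * p) a := by
    rw [schattenNorm_two_mul hptop, schattenNorm_two_mul hptop, ← Real.sqrt_mul hC,
      conjTranspose_conjTranspose, schattenNorm_mul_conjTranspose_self hptop, ← hs,
      ← schattenNorm_mul_conjTranspose_self hptop a]
    exact Real.sqrt_le_sqrt (hb _)
  have htb : schattenNorm (2 * p) t ≤ √C * schattenNorm (2 * p) b := by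
    rw [schattenNorm_two_mul hptop, schattenNorm_two_mul hptop, ← Real.sqrt_mul hC, ← ht]
    exact Real.sqrt_le_sqrt (hb _)
  rw [hzu]
  calc _ ≤ schattenNorm (2 * p) sᴴ * opNorm z * schattenNorm (2 * p) t := pisierNorm_le _ _ _
    _ ≤ (√C * schattenNorm (2 * p) a) * opNorm y * (√C * schattenNorm (2 * p) b) := by
      have := schattenNorm_nonneg (p := 2 * p) a
      have := schattenNorm_nonneg (p := 2 * p) t
      have hz' : opNorm z ≤ opNorm y := hz
      have := opNorm_nonneg z
      have := opNorm_nonneg y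
      gcongr
    _ = (√C * √C) * (schattenNorm (2 * p) a * opNorm y * schattenNorm (2 * p) b) := by ring
    _ = _ := by rw [Real.mul_self_sqrt hC, ← smul_eq_mul]
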